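/- Let J(x) = x·tanh x, let ξ, η be real with ξ ≠ 0, η ≠ 0, ξ + η ≠ 0, set ζ = −(ξ + η) and Ω = J(ξ)² + J(η)² + J(ζ)² − 2J(ξ)J(η) − 2J(η)J(ζ) − 2J(ζ)J(ξ) (which is nonzero), and define A^h(ξ,η) = 2iη·J(ξ)·(J(ζ) − J(ξ) + J(η))/Ω, B^h(ξ,η) = −2iζ·J(ξ)·J(η)/Ω, C^h(ξ,η) = −iξηζ·(J(ζ) − J(ξ) − J(η))/Ω. Then: (1) (ξ+η)·A^h(ξ,η) − 2η·B^h(ξ,η) − 2·tanh ξ·C^h(ξ,η) = 0; (2) −(1/2)(ξ·A^h(ξ,η) + η·A^h(η,ξ)) + tanh(ξ+η)·C^h(ξ,η) = iξη; and (3) −(1/2)(tanh η·A^h(ξ,η) + tanh ξ·A^h(η,ξ)) + tanh(ξ+η)·B^h(ξ,η) = 0. -/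

import Mathlib

noncomputable def J (x : ℝ) : ℝ := x * Real.tanh x

noncomputable def Ω (ξ η ζ : ℝ) : ℝ :=
  J ξ ^ 2 + J η ^ 2 + J ζ ^ 2 - 2 * J ξ * J η - 2 * J η * J ζ - 2 * J ζ * J ξ

noncomputable def Ah (ξ η : ℝ) : ℂ :=
  2 * Complex.I * (η : ℂ) * (J ξ : ℂ) * ((J (-(ξ + η)) - J ξ + J η : ℝ) : ℂ) /
    ((Ω ξ η (-(ξ + η)) : ℝ) : ℂ)

noncomputable def Bh (ξ η : ℝ) : ℂ :=
  -2 * Complex.I * ((-(ξ + η) : ℝ) : ℂ) * (J ξ : ℂ) * (J η : ℂ) /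
    ((Ω ξ η (-(ξ + η)) : ℝ) : ℂ)

noncomputable def Ch (ξ η : ℝ) : ℂ :=
  -Complex.I * (ξ : ℂ) * (η : ℂ) * ((-(ξ + η) : ℝ) : ℂ) *
      ((J (-(ξ + η)) - J ξ - J η : ℝ) : ℂ) /
    ((Ω ξ η (-(ξ + η)) : ℝ) : ℂ)

/-!
Writing `a, b, c` for the square roots of `J ξ, J η, J ζ`, Heron's factorization gives
`Ω = -(a + b + c) (a + b - c) (b + c - a) (c + a - b)`. Since `tanh` is strictly concave on
`[0, ∞)`, the quotient `√(J x) / x = √(tanh x / x)` is strictly decreasing on `(0, ∞)`, so the even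
function `√J` is strictly subadditive away from `0`. Hence `a, b, c` are the sides of a
nondegenerate triangle and `Ω < 0`. Over the common denominator `Ω`, the three equations are
polynomial identities which use nothing about `tanh` but `J x = x * tanh x` and its oddness.
-/

theorem heron_factorization {R : Type*} [CommRing R] (a b c : R) :
    (a ^ 2) ^ 2 + (b ^ 2) ^ 2 + (c ^ 2) ^ 2 -
        2 * a ^ 2 * b ^ 2 - 2 * b ^ 2 * c ^ 2 - 2 * c ^ 2 * a ^ 2 =
      -((a + b + c) * (a + b - c) * (b + c - a) * (c + a - b)) := by
  ring

theorem heron_product_pos {R : Type*} [CommRing R] [LinearOrder R] [IsStrictOrderedRing R]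
    {a b c : R} (hab : c < a + b) (hbc : a < b + c) (hca : b < c + a) :
    0 < (a + b + c) * (a + b - c) * (b + c - a) * (c + a - b) := by
  have hsum : 0 < a + b + c := by linarith
  exact mul_pos (mul_pos (mul_pos hsum (sub_pos.2 hab)) (sub_pos.2 hbc)) (sub_pos.2 hca)

section StrictSubadditivity

variable {𝕜 : Type*} [Field 𝕜] [LinearOrder 𝕜] [IsStrictOrderedRing 𝕜] {f : 𝕜 → 𝕜}

theorem strictAntiOn_div_self_of_strictConcaveOn (hf : StrictConcaveOn 𝕜 (Set.Ici 0) f)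
    (hf0 : f 0 = 0) : StrictAntiOn (fun x ↦ f x / x) (Set.Ioi 0) := by
  intro x hx y hy hxy
  simpa [hf0] using hf.secant_strict_mono Set.self_mem_Ici (Set.Ioi_subset_Ici_self hx)
    (Set.Ioi_subset_Ici_self hy) (ne_of_gt hx) (ne_of_gt hy) hxy

theorem map_add_lt_add_of_strictAntiOn_div_self (hf : StrictAntiOn (fun x ↦ f x / x) (Set.Ioi 0))
    {x y : 𝕜} (hx : 0 < x) (hy : 0 < y) : f (x + y) < f x + f y := by
  have hxy : 0 < x + y := add_pos hx hy
  calc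
    f (x + y) = x * (f (x + y) / (x + y)) + y * (f (x + y) / (x + y)) := by field_simp
    _ < x * (f x / x) + y * (f y / y) := by
      gcongr ?_ * ?_ + ?_ * ?_
      · exact hf hx hxy (lt_add_of_pos_right x hy)
      · exact hf hy hxy (lt_add_of_pos_left y hx)
    _ = f x + f y := by rw [mul_div_cancel₀ _ hx.ne', mul_div_cancel₀ _ hy.ne']

end StrictSubadditivity

theorem hasDerivAt_tanh (x : ℝ) : HasDerivAt Real.tanh (1 / Real.cosh x ^ 2) x := by
  have h := (Real.hasDerivAt_sinh x).div (Real.hasDerivAt_cosh x) (Real.cosh_pos x).ne'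
  have hnum : Real.cosh x * Real.cosh x - Real.sinh x * Real.sinh x = 1 := by
    linear_combination Real.cosh_sq_sub_sinh_sq x
  rw [hnum] at h
  exact h.congr_of_eventuallyEq (.of_forall Real.tanh_eq_sinh_div_cosh)

theorem deriv_tanh : deriv Real.tanh = fun x ↦ 1 / Real.cosh x ^ 2 :=
  funext fun x ↦ (hasDerivAt_tanh x).deriv

theorem continuous_tanh : Continuous Real.tanh :=
  continuous_iff_continuousAt.2 fun x ↦ (hasDerivAt_tanh x).continuousAt

theorem tanh_strictMono : StrictMono Real.tanh := by
  refine strictMono_of_deriv_pos fun x ↦ ?_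
  rw [deriv_tanh]
  have := Real.cosh_pos x
  positivity

theorem tanh_nonneg {x : ℝ} (hx : 0 ≤ x) : 0 ≤ Real.tanh x :=
  Real.tanh_zero ▸ tanh_strictMono.monotone hx

theorem strictConcaveOn_tanh : StrictConcaveOn ℝ (Set.Ici 0) Real.tanh := by
  refine StrictAntiOn.strictConcaveOn_of_deriv (convex_Ici 0) continuous_tanh.continuousOn ?_
  rw [interior_Ici, deriv_tanh]
  intro x hx y hy hxy
  have hcosh : Real.cosh x < Real.cosh y :=
    Real.cosh_strictMonoOn (Set.Ioi_subset_Ici_self hx) (Set.Ioi_subset_Ici_self hy) hxy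
  have := Real.cosh_pos x
  dsimp only
  gcongr

theorem strictAntiOn_tanh_div_self : StrictAntiOn (fun x ↦ Real.tanh x / x) (Set.Ioi 0) :=
  strictAntiOn_div_self_of_strictConcaveOn strictConcaveOn_tanh Real.tanh_zero

theorem J_neg (x : ℝ) : J (-x) = J x := by
  simp [J, Real.tanh_neg]

theorem J_abs (x : ℝ) : J |x| = J x := by
  rcases abs_choice x with h | h <;> simp only [h, J_neg]

theorem J_nonneg (x : ℝ) : 0 ≤ J x := by
  rw [← J_abs]
  exact mul_nonneg (abs_nonneg x) (tanh_nonneg (abs_nonneg x))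

theorem monotoneOn_J : MonotoneOn J (Set.Ici 0) := by
  intro x hx y hy hxy
  exact mul_le_mul hxy (tanh_strictMono.monotone hxy) (tanh_nonneg hx) hy

theorem strictAntiOn_sqrt_J_div_self : StrictAntiOn (fun x ↦ √(J x) / x) (Set.Ioi 0) := by
  have sqrt_J_div_self {x : ℝ} (hx : 0 < x) : √(J x) / x = √(Real.tanh x / x) := by
    rw [← Real.sqrt_sq hx.le, ← Real.sqrt_div' _ (sq_nonneg x), Real.sqrt_sq hx.le, J, sq,
      mul_div_mul_left _ _ hx.ne']
  intro x hx y hy hxy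
  simp only [sqrt_J_div_self hx, sqrt_J_div_self hy]
  exact Real.sqrt_lt_sqrt (div_nonneg (tanh_nonneg (le_of_lt hy)) (le_of_lt hy))
    (strictAntiOn_tanh_div_self hx hy hxy)

theorem sqrt_J_add_lt {x y : ℝ} (hx : x ≠ 0) (hy : y ≠ 0) : √(J (x + y)) < √(J x) + √(J y) := by
  have hmono : J (x + y) ≤ J (|x| + |y|) := by
    rw [← J_abs (x + y)]
    exact monotoneOn_J (Set.mem_Ici.2 (abs_nonneg (x + y)))
      (Set.mem_Ici.2 (add_nonneg (abs_nonneg x) (abs_nonneg y))) (abs_add_le x y)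
  calc
    √(J (x + y)) ≤ √(J (|x| + |y|)) := Real.sqrt_le_sqrt hmono
    _ < √(J |x|) + √(J |y|) :=
      map_add_lt_add_of_strictAntiOn_div_self strictAntiOn_sqrt_J_div_self
        (abs_pos.2 hx) (abs_pos.2 hy)
    _ = √(J x) + √(J y) := by rw [J_abs, J_abs]

theorem Ω_swap (ξ η ζ : ℝ) : Ω η ξ ζ = Ω ξ η ζ := by
  unfold Ω
  ring

theorem Ω_eq_neg_heron_product (ξ η ζ : ℝ) :
    Ω ξ η ζ = -((√(J ξ) + √(J η) + √(J ζ)) * (√(J ξ) + √(J η) - √(J ζ)) *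
      (√(J η) + √(J ζ) - √(J ξ)) * (√(J ζ) + √(J ξ) - √(J η))) := by
  rw [← heron_factorization]
  simp only [Ω, Real.sq_sqrt (J_nonneg _)]

theorem Ω_neg_of_add_eq_zero {ξ η ζ : ℝ} (hξ : ξ ≠ 0) (hη : η ≠ 0) (hζ : ζ ≠ 0)
    (h : ξ + η + ζ = 0) : Ω ξ η ζ < 0 := by
  have triangle {x y z : ℝ} (hx : x ≠ 0) (hy : y ≠ 0) (hxyz : x + y + z = 0) :
      √(J z) < √(J x) + √(J y) := by
    rw [eq_neg_of_add_eq_zero_right hxyz, J_neg]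
    exact sqrt_J_add_lt hx hy
  rw [Ω_eq_neg_heron_product, neg_lt_zero]
  exact heron_product_pos (triangle hξ hη h) (triangle hη hζ (by linarith))
    (triangle hζ hξ (by linarith))

section Symbols

variable (ξ η : ℝ)

theorem ofReal_J : (J ξ : ℂ) = ξ * (Real.tanh ξ : ℂ) :=
  Complex.ofReal_mul _ _

theorem Ah_eq : Ah ξ η =
    2 * Complex.I * η * J ξ * (J (ξ + η) - J ξ + J η) / Ω ξ η (-(ξ + η)) := by
  simp only [Ah, J_neg, Complex.ofReal_add, Complex.ofReal_sub]

theorem Ah_swap_eq : Ah η ξ =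
    2 * Complex.I * ξ * J η * (J (ξ + η) - J η + J ξ) / Ω ξ η (-(ξ + η)) := by
  rw [Ah_eq, add_comm η ξ, Ω_swap]

theorem Bh_eq : Bh ξ η = 2 * Complex.I * (ξ + η) * J ξ * J η / Ω ξ η (-(ξ + η)) := by
  simp only [Bh, Complex.ofReal_neg, Complex.ofReal_add]
  ring

theorem Ch_eq : Ch ξ η =
    Complex.I * ξ * η * (ξ + η) * (J (ξ + η) - J ξ - J η) / Ω ξ η (-(ξ + η)) := by
  simp only [Ch, J_neg, Complex.ofReal_neg, Complex.ofReal_add, Complex.ofReal_sub]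
  ring

theorem mul_Ah_add_mul_Ah_swap : ξ * Ah ξ η + η * Ah η ξ =
    2 * Complex.I * ξ * η * (J (ξ + η) * (J ξ + J η) - (J ξ - J η) ^ 2) /
      Ω ξ η (-(ξ + η)) := by
  rw [Ah_eq, Ah_swap_eq]
  ring

theorem tanh_mul_Ah_add_tanh_mul_Ah_swap :
    (Real.tanh η : ℂ) * Ah ξ η + (Real.tanh ξ : ℂ) * Ah η ξ =
      4 * Complex.I * J ξ * J η * J (ξ + η) / Ω ξ η (-(ξ + η)) := by
  rw [Ah_eq, Ah_swap_eq, ofReal_J ξ, ofReal_J η]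
  ring

theorem tanh_add_mul_Bh : (Real.tanh (ξ + η) : ℂ) * Bh ξ η =
    2 * Complex.I * J ξ * J η * J (ξ + η) / Ω ξ η (-(ξ + η)) := by
  rw [Bh_eq, ofReal_J (ξ + η), Complex.ofReal_add]
  ring

theorem tanh_mul_Ch : (Real.tanh ξ : ℂ) * Ch ξ η =
    Complex.I * η * (ξ + η) * J ξ * (J (ξ + η) - J ξ - J η) / Ω ξ η (-(ξ + η)) := by
  rw [Ch_eq, ofReal_J ξ]
  ring

theorem tanh_add_mul_Ch : (Real.tanh (ξ + η) : ℂ) * Ch ξ η =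
    Complex.I * ξ * η * J (ξ + η) * (J (ξ + η) - J ξ - J η) / Ω ξ η (-(ξ + η)) := by
  rw [Ch_eq, ofReal_J (ξ + η), Complex.ofReal_add]
  ring

theorem ofReal_Ω : (Ω ξ η (-(ξ + η)) : ℂ) =
    (J (ξ + η)) ^ 2 - 2 * J (ξ + η) * (J ξ + J η) + (J ξ - J η) ^ 2 := by
  simp only [Ω, J_neg]
  push_cast
  ring

theorem add_mul_Ah_sub_mul_Bh_sub_tanh_mul_Ch :
    ((ξ + η : ℝ) : ℂ) * Ah ξ η - 2 * (η : ℂ) * Bh ξ η -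
      2 * (Real.tanh ξ : ℂ) * Ch ξ η = 0 := by
  rw [mul_assoc 2 (Real.tanh ξ : ℂ), tanh_mul_Ch, Ah_eq, Bh_eq, Complex.ofReal_add]
  ring

variable {ξ η} in
theorem mul_Ah_add_mul_Ah_swap_add_tanh_add_mul_Ch (hΩ : Ω ξ η (-(ξ + η)) ≠ 0) :
    -(1 / 2 : ℂ) * ((ξ : ℂ) * Ah ξ η + (η : ℂ) * Ah η ξ) +
      (Real.tanh (ξ + η) : ℂ) * Ch ξ η = Complex.I * (ξ : ℂ) * (η : ℂ) := by
  have hΩ' : (Ω ξ η (-(ξ + η)) : ℂ) ≠ 0 := Complex.ofReal_ne_zero.2 hΩ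
  calc
    _ = Complex.I * ξ * η *
        (J (ξ + η) ^ 2 - 2 * J (ξ + η) * (J ξ + J η) + (J ξ - J η) ^ 2) /
          Ω ξ η (-(ξ + η)) := by
      rw [mul_Ah_add_mul_Ah_swap, tanh_add_mul_Ch]
      ring
    _ = Complex.I * ξ * η := by rw [← ofReal_Ω, mul_div_cancel_right₀ _ hΩ']

theorem tanh_mul_Ah_add_tanh_mul_Ah_swap_add_tanh_add_mul_Bh :
    -(1 / 2 : ℂ) * ((Real.tanh η : ℂ) * Ah ξ η + (Real.tanh ξ : ℂ) * Ah η ξ) +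
      (Real.tanh (ξ + η) : ℂ) * Bh ξ η = 0 := by
  rw [tanh_mul_Ah_add_tanh_mul_Ah_swap, tanh_add_mul_Bh]
  ring

end Symbols

/-- The holomorphic normal-form symbols of the finite-depth gravity water-wave
system solve the (symmetrized) linear system cancelling the purely holomorphic
quadratic nonlinearity. -/
theorem normal_form_symbols_solve_system (ξ η : ℝ)
    (hξ : ξ ≠ 0) (hη : η ≠ 0) (hξη : ξ + η ≠ 0) :
    Ω ξ η (-(ξ + η)) ≠ 0 ∧
      ((ξ + η : ℝ) : ℂ) * Ah ξ η - 2 * (η : ℂ) * Bh ξ η -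
        2 * (Real.tanh ξ : ℂ) * Ch ξ η = 0 ∧
      -(1 / 2 : ℂ) * ((ξ : ℂ) * Ah ξ η + (η : ℂ) * Ah η ξ) +
        (Real.tanh (ξ + η) : ℂ) * Ch ξ η = Complex.I * (ξ : ℂ) * (η : ℂ) ∧
      -(1 / 2 : ℂ) * ((Real.tanh η : ℂ) * Ah ξ η + (Real.tanh ξ : ℂ) * Ah η ξ) +
        (Real.tanh (ξ + η) : ℂ) * Bh ξ η = 0 := by
  have hΩ : Ω ξ η (-(ξ + η)) ≠ 0 :=
    (Ω_neg_of_add_eq_zero hξ hη (neg_ne_zero.2 hξη) (add_neg_cancel _)).ne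
  exact ⟨hΩ, add_mul_Ah_sub_mul_Bh_sub_tanh_mul_Ch ξ η,
    mul_Ah_add_mul_Ah_swap_add_tanh_add_mul_Ch hΩ,
    tanh_mul_Ah_add_tanh_mul_Ah_swap_add_tanh_add_mul_Bh ξ η⟩
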